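/- arXiv:1409.5877 — 4 statements merged into one kernel-verified Lean document; each statement's English description precedes it below -/
import Mathlib

section
/- Let p > 1, a = 0, ε > 0, T > 0. Let g ∈ C¹(ℝ) satisfy g ≥ 0 on ℝ and ∫_{−1}^{1} g(y) dy > 0, and set c₀ = (1/2)∫_{−1}^{1} g(y) dy. Suppose u ∈ C(ℝ×[0,T]) satisfies u(x,t) = (ε/2)∫_{x−t}^{x+t} g(y) dy + (1/2)∬_{D(x,t)} |u(y,s)|^p (1+y²)^{−1/2} dy ds on ℝ×[0,T]. Then for every j ∈ ℕ (j ≥ 1) and every (x,t) ∈ Γ₁ = {(x,t) ∈ [0,∞)×[0,T] : t−x ≥ 1}, one has u(x,t) ≥ C_{0,j} · { (t−x−1)·log(1+x) }^{a_j}, where a_j = (p^j − 1)/(p−1). -/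
open MeasureTheory Real Set

/-!
By d'Alembert's formula the data contribute at least `c₀ ε` on `Γ₁`, where the base of the backward
cone contains `[-1, 1]`. The integral equation then improves lower bounds: if
`u ≥ K {(t - x - 1) log (1 + x)} ^ a` on `Γ₁`, then one restricts the double integral to the part of
the cone between the characteristics `s - y = 1` and `s - y = t - x` and above `0 ≤ y ≤ x`.
In the coordinates `(y, s - y)` this is a rectangle on which the integrand dominates a product, and
since `√(1 + y²) ≤ 1 + y` the two factors integrate exactly, giving the exponent `p a + 1` and the
constant `K ^ p / (2 (p a + 1) ^ 2)`. The exponents `a_j` satisfy `a_{j + 1} = p a_j + 1` and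
`a_{j + 1} ≤ p ^ (j + 1) / (p - 1)`; replacing `a_{j + 1}` by the latter in the constant yields a
recursion whose solution is `C_{0,j}`.
-/

section Integrals

theorem setIntegral_prod_eq_integral_slices {α β E : Type*} [MeasurableSpace α] [MeasurableSpace β]
    [NormedAddCommGroup E] [NormedSpace ℝ E] {μ : Measure α} {ν : Measure β} [SFinite μ] [SFinite ν]
    {A : Set (α × β)} (hA : MeasurableSet A) {f : α × β → E} (hf : IntegrableOn f A (μ.prod ν)) :
    ∫ z in A, f z ∂μ.prod ν = ∫ y, ∫ x in {x | (x, y) ∈ A}, f (x, y) ∂μ ∂ν := by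
  rw [← integral_indicator hA, integral_prod_symm _ ((integrable_indicator_iff hA).2 hf)]
  congr with y
  exact integral_indicator (measurable_prodMk_right hA)

theorem intervalIntegral_sub_rpow {q : ℝ} (hq : -1 < q) (a b : ℝ) :
    ∫ s in a..b, (s - a) ^ q = (b - a) ^ (q + 1) / (q + 1) := by
  rw [intervalIntegral.integral_comp_sub_right (fun s => s ^ q), integral_rpow (.inl hq),
    sub_self, zero_rpow (by linarith), sub_zero]

theorem intervalIntegral_log_one_add_rpow_div {q x : ℝ} (hq : 0 ≤ q) (hx : 0 ≤ x) :
    ∫ y in (0 : ℝ)..x, log (1 + y) ^ q / (1 + y) = log (1 + x) ^ (q + 1) / (q + 1) := by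
  have hne : ∀ y ∈ uIcc 0 x, 1 + y ≠ 0 := fun y hy => by
    rw [uIcc_of_le hx] at hy
    linarith [hy.1]
  have hderiv : ∀ y ∈ uIcc 0 x, HasDerivAt (fun y => log (1 + y)) (1 + y)⁻¹ y := fun y hy => by
    simpa using ((hasDerivAt_id y).const_add 1).log (hne y hy)
  calc ∫ y in (0 : ℝ)..x, log (1 + y) ^ q / (1 + y)
      = ∫ v in log (1 + 0)..log (1 + x), v ^ q :=
        intervalIntegral.integral_comp_mul_deriv (g := fun v => v ^ q) hderiv
          (ContinuousOn.inv₀ (by fun_prop) hne) (continuous_rpow_const hq)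
    _ = log (1 + x) ^ (q + 1) / (q + 1) := by
        rw [integral_rpow (.inl (by linarith)), add_zero, log_one, zero_rpow (by linarith),
          sub_zero]

end Integrals

section CharacteristicGeometry

/-- The backward characteristic triangle `D(x, t)` of the one-dimensional wave equation, as a set of
points `(y, s)` with the space variable first. -/
def backwardCone (x t : ℝ) : Set (ℝ × ℝ) :=
  {z | z.2 ∈ Icc 0 t ∧ z.1 ∈ Icc (x - t + z.2) (x + t - z.2)}

/-- The points `(y, s)` with `y ∈ I` and characteristic coordinate `s - y ∈ J`. For suitable
intervals this is the part of the cone on which the solution is bounded from below. -/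
def characteristicStrip (I J : Set ℝ) : Set (ℝ × ℝ) :=
  {z | z.1 ∈ I ∧ z.2 - z.1 ∈ J}

theorem isCompact_backwardCone (x t : ℝ) : IsCompact (backwardCone x t) := by
  have hbox : IsCompact (Icc (x - t) (x + t) ×ˢ Icc 0 t) := isCompact_Icc.prod isCompact_Icc
  refine hbox.of_isClosed_subset ?_ fun z ⟨⟨hs₀, hst⟩, hl, hr⟩ =>
    ⟨⟨by linarith, by linarith⟩, hs₀, hst⟩
  exact (isClosed_Icc.preimage continuous_snd).inter
    ((isClosed_le (f := fun z : ℝ × ℝ => x - t + z.2) (by fun_prop) continuous_fst).inter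
      (isClosed_le (g := fun z : ℝ × ℝ => x + t - z.2) continuous_fst (by fun_prop)))

theorem backwardCone_subset_prod {t T : ℝ} (htT : t ≤ T) (x : ℝ) :
    backwardCone x t ⊆ univ ×ˢ Icc 0 T :=
  fun _ hz => ⟨mem_univ _, hz.1.1, hz.1.2.trans htT⟩

theorem measurableSet_characteristicStrip {I J : Set ℝ} (hI : MeasurableSet I)
    (hJ : MeasurableSet J) : MeasurableSet (characteristicStrip I J) :=
  (measurable_fst hI).inter ((measurable_snd.sub measurable_fst) hJ)

theorem characteristicStrip_subset_backwardCone (x t : ℝ) :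
    characteristicStrip (Ioc 0 x) (Ioc 1 (t - x)) ⊆ backwardCone x t :=
  fun _ ⟨⟨hy₀, hyx⟩, hs₁, hst⟩ =>
    ⟨⟨by linarith, by linarith⟩, by linarith, by linarith⟩

theorem setIntegral_backwardCone {E : Type*} [NormedAddCommGroup E] [NormedSpace ℝ E]
    {f : ℝ × ℝ → E} {x t : ℝ} (ht : 0 ≤ t) (hf : IntegrableOn f (backwardCone x t)) :
    ∫ z in backwardCone x t, f z =
      ∫ s in (0 : ℝ)..t, ∫ y in (x - t + s)..(x + t - s), f (y, s) := by
  have hslice : ∀ s, ∫ y in {y | (y, s) ∈ backwardCone x t}, f (y, s) =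
      (Icc 0 t).indicator (fun s => ∫ y in (x - t + s)..(x + t - s), f (y, s)) s := fun s => by
    by_cases hs : s ∈ Icc 0 t
    · rw [indicator_of_mem hs, intervalIntegral.integral_of_le (by linarith [hs.2]),
        ← integral_Icc_eq_integral_Ioc]
      simp only [backwardCone, mem_ofPred_eq, hs, true_and, ofPred_mem_eq]
    · simp only [backwardCone, mem_ofPred_eq, hs, false_and, ofPred_false, Measure.restrict_empty,
        integral_zero_measure, not_false_eq_true, indicator_of_notMem]
  rw [Measure.volume_eq_prod, setIntegral_prod_eq_integral_slices
    (isCompact_backwardCone x t).measurableSet hf]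
  simp only [hslice]
  rw [integral_indicator measurableSet_Icc, integral_Icc_eq_integral_Ioc,
    ← intervalIntegral.integral_of_le ht]

theorem setIntegral_characteristicStrip_mul (I J : Set ℝ) (φ ψ : ℝ → ℝ) :
    ∫ z in characteristicStrip I J, φ z.1 * ψ (z.2 - z.1) =
      (∫ y in I, φ y) * ∫ r in J, ψ r := by
  rw [← setIntegral_prod_mul, ← Measure.volume_eq_prod]
  exact (measurePreserving_prod_sub volume volume).setIntegral_preimage_emb
    (MeasurableEquiv.shearSubRight ℝ).measurableEmbedding (fun z => φ z.1 * ψ z.2) (I ×ˢ J)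

theorem setIntegral_characteristicStrip_log_rpow {q x r : ℝ} (hq : 0 ≤ q) (hx : 0 ≤ x)
    (hr : 1 ≤ r) :
    ∫ z in characteristicStrip (Ioc 0 x) (Ioc 1 r),
        log (1 + z.1) ^ q / (1 + z.1) * (z.2 - z.1 - 1) ^ q =
      ((r - 1) * log (1 + x)) ^ (q + 1) / (q + 1) ^ 2 := by
  rw [setIntegral_characteristicStrip_mul _ _ (fun y => log (1 + y) ^ q / (1 + y))
      (fun r => (r - 1) ^ q), ← intervalIntegral.integral_of_le hx,
    ← intervalIntegral.integral_of_le hr, intervalIntegral_log_one_add_rpow_div hq hx,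
    intervalIntegral_sub_rpow (by linarith),
    mul_rpow (by linarith) (log_nonneg (by linarith)),
    div_mul_div_comm, ← sq, mul_comm (log _ ^ _)]

end CharacteristicGeometry

section LowerBounds

/-- The source term `|u| ^ p / √(1 + y²)` of the wave equation, as a function of `z = (y, s)`. -/
noncomputable def waveSource (p : ℝ) (u : ℝ → ℝ → ℝ) (z : ℝ × ℝ) : ℝ :=
  |u z.1 z.2| ^ p / (1 + z.1 ^ 2) ^ ((1 : ℝ) / 2)

/-- Supersolutions, for times in `[0, T]`, of the integral form of the wave equation with source
`waveSource p u` and initial data `(u, ∂ₜu) = (0, ε g)`. -/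
def IsMildSupersolution (p ε T : ℝ) (g : ℝ → ℝ) (u : ℝ → ℝ → ℝ) : Prop :=
  ∀ x t : ℝ, t ∈ Icc 0 T → ε / 2 * (∫ y in (x - t)..(x + t), g y) +
    1 / 2 * (∫ z in backwardCone x t, waveSource p u z) ≤ u x t

/-- The lower bound `u ≥ K {(t - x - 1) log (1 + x)} ^ a` on the region `Γ₁`, the form that is
propagated by the iteration. -/
def HasLogLowerBound (T : ℝ) (u : ℝ → ℝ → ℝ) (K a : ℝ) : Prop :=
  ∀ x t : ℝ, 0 ≤ x → t ∈ Icc 0 T → 1 ≤ t - x → K * ((t - x - 1) * log (1 + x)) ^ a ≤ u x t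

variable {p ε T K a : ℝ} {g : ℝ → ℝ} {u : ℝ → ℝ → ℝ}

theorem waveSource_nonneg (p : ℝ) (u : ℝ → ℝ → ℝ) (z : ℝ × ℝ) : 0 ≤ waveSource p u z := by
  unfold waveSource
  positivity

theorem integrableOn_waveSource_backwardCone (hp : 0 ≤ p)
    (hu : ContinuousOn (fun z : ℝ × ℝ => u z.1 z.2) (univ ×ˢ Icc 0 T)) {t : ℝ} (htT : t ≤ T)
    (x : ℝ) : IntegrableOn (waveSource p u) (backwardCone x t) := by
  refine ContinuousOn.integrableOn_compact (isCompact_backwardCone x t) ?_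
  refine ((hu.mono (backwardCone_subset_prod htT x)).abs.rpow_const fun _ _ => .inr hp).div ?_
    fun z _ => by positivity
  exact ContinuousOn.rpow_const (by fun_prop) fun _ _ => .inr (by norm_num)

theorem one_add_sq_rpow_half_le {y : ℝ} (hy : 0 ≤ y) : (1 + y ^ 2) ^ ((1 : ℝ) / 2) ≤ 1 + y := by
  rw [← sqrt_eq_rpow, sqrt_le_left (by linarith)]
  linarith [add_sq 1 y]

theorem HasLogLowerBound.mono {K' : ℝ} (h : HasLogLowerBound T u K a) (hK : K' ≤ K) :
    HasLogLowerBound T u K' a := by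
  intro x t hx ht hxt
  have hlog : 0 ≤ log (1 + x) := log_nonneg (by linarith)
  have : 0 ≤ t - x - 1 := by linarith
  exact le_trans (by gcongr) (h x t hx ht hxt)

theorem HasLogLowerBound.le_waveSource (hp : 0 ≤ p) (hK : 0 ≤ K) (h : HasLogLowerBound T u K a)
    {y s : ℝ} (hy : 0 ≤ y) (hs : s ≤ T) (hys : 1 ≤ s - y) :
    K ^ p * (log (1 + y) ^ (p * a) / (1 + y) * (s - y - 1) ^ (p * a)) ≤ waveSource p u (y, s) := by
  have hlog : 0 ≤ log (1 + y) := log_nonneg (by linarith)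
  have hr : 0 ≤ s - y - 1 := by linarith
  have hu : K * ((s - y - 1) * log (1 + y)) ^ a ≤ |u y s| :=
    (h y s hy ⟨by linarith, hs⟩ hys).trans (le_abs_self _)
  calc K ^ p * (log (1 + y) ^ (p * a) / (1 + y) * (s - y - 1) ^ (p * a))
      = (K * ((s - y - 1) * log (1 + y)) ^ a) ^ p / (1 + y) := by
        rw [mul_rpow hK (by positivity), ← rpow_mul (by positivity), mul_comm a p, mul_rpow hr hlog]
        ring
    _ ≤ |u y s| ^ p / (1 + y ^ 2) ^ ((1 : ℝ) / 2) := by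
        gcongr
        exact one_add_sq_rpow_half_le hy

theorem HasLogLowerBound.le_setIntegral_waveSource (hp : 0 ≤ p) (hK : 0 ≤ K) (ha : 0 ≤ a)
    (hu : ContinuousOn (fun z : ℝ × ℝ => u z.1 z.2) (univ ×ˢ Icc 0 T))
    (h : HasLogLowerBound T u K a) {x t : ℝ} (hx : 0 ≤ x) (htT : t ≤ T) (hxt : 1 ≤ t - x) :
    K ^ p * (((t - x - 1) * log (1 + x)) ^ (p * a + 1) / (p * a + 1) ^ 2) ≤
      ∫ z in backwardCone x t, waveSource p u z := by
  have hint := integrableOn_waveSource_backwardCone hp hu htT x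
  have hsub := characteristicStrip_subset_backwardCone x t
  have hmeas : MeasurableSet (characteristicStrip (Ioc 0 x) (Ioc 1 (t - x))) :=
    measurableSet_characteristicStrip measurableSet_Ioc measurableSet_Ioc
  calc K ^ p * (((t - x - 1) * log (1 + x)) ^ (p * a + 1) / (p * a + 1) ^ 2)
      = ∫ z in characteristicStrip (Ioc 0 x) (Ioc 1 (t - x)),
          K ^ p * (log (1 + z.1) ^ (p * a) / (1 + z.1) * (z.2 - z.1 - 1) ^ (p * a)) := by
        rw [integral_const_mul, setIntegral_characteristicStrip_log_rpow (by positivity) hx hxt]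
    _ ≤ ∫ z in characteristicStrip (Ioc 0 x) (Ioc 1 (t - x)), waveSource p u z := by
        refine integral_mono_of_nonneg ?_ (hint.mono_set hsub) ?_
        · filter_upwards [ae_restrict_mem hmeas] with z ⟨⟨hy, _⟩, hr, _⟩
          have hlog : 0 ≤ log (1 + z.1) := log_nonneg (by linarith)
          have : 0 ≤ z.2 - z.1 - 1 := by linarith
          simp only [Pi.zero_apply]
          positivity
        · filter_upwards [ae_restrict_mem hmeas] with z hz
          exact h.le_waveSource hp hK hz.1.1.le ((hsub hz).1.2.trans htT) hz.2.1.le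
    _ ≤ ∫ z in backwardCone x t, waveSource p u z :=
        setIntegral_mono_set hint (.of_forall (waveSource_nonneg p u)) hsub.eventuallyLE

theorem HasLogLowerBound.improve (hp : 0 ≤ p) (hK : 0 ≤ K) (ha : 0 ≤ a)
    (hu : ContinuousOn (fun z : ℝ × ℝ => u z.1 z.2) (univ ×ˢ Icc 0 T))
    (hsource : ∀ x t, t ∈ Icc 0 T → 1 / 2 * ∫ z in backwardCone x t, waveSource p u z ≤ u x t)
    (h : HasLogLowerBound T u K a) :
    HasLogLowerBound T u (K ^ p / (2 * (p * a + 1) ^ 2)) (p * a + 1) := by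
  intro x t hx ht hxt
  calc K ^ p / (2 * (p * a + 1) ^ 2) * ((t - x - 1) * log (1 + x)) ^ (p * a + 1)
      = 1 / 2 * (K ^ p * (((t - x - 1) * log (1 + x)) ^ (p * a + 1) / (p * a + 1) ^ 2)) := by
        field_simp
    _ ≤ 1 / 2 * ∫ z in backwardCone x t, waveSource p u z := by
        gcongr
        exact h.le_setIntegral_waveSource hp hK ha hu hx ht.2 hxt
    _ ≤ u x t := hsource x t ht

theorem isMildSupersolution_iff (hp : 0 ≤ p)
    (hu : ContinuousOn (fun z : ℝ × ℝ => u z.1 z.2) (univ ×ˢ Icc 0 T)) :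
    IsMildSupersolution p ε T g u ↔ ∀ x t : ℝ, t ∈ Icc 0 T →
      ε / 2 * (∫ y in (x - t)..(x + t), g y) + 1 / 2 * (∫ s in (0 : ℝ)..t,
        ∫ y in (x - t + s)..(x + t - s), |u y s| ^ p / (1 + y ^ 2) ^ ((1 : ℝ) / 2)) ≤ u x t := by
  refine forall₃_congr fun x t ht => ?_
  rw [setIntegral_backwardCone ht.1 (integrableOn_waveSource_backwardCone hp hu ht.2 x)]
  rfl

theorem IsMildSupersolution.source_le (h : IsMildSupersolution p ε T g u) (hε : 0 ≤ ε)
    (hg : ∀ x, 0 ≤ g x) (x t : ℝ) (ht : t ∈ Icc 0 T) :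
    1 / 2 * ∫ z in backwardCone x t, waveSource p u z ≤ u x t := by
  have hdata : 0 ≤ ∫ y in (x - t)..(x + t), g y :=
    intervalIntegral.integral_nonneg (by linarith [ht.1]) fun y _ => hg y
  exact (le_add_of_nonneg_left (by positivity)).trans (h x t ht)

theorem IsMildSupersolution.data_le (h : IsMildSupersolution p ε T g u) (x t : ℝ)
    (ht : t ∈ Icc 0 T) : ε / 2 * (∫ y in (x - t)..(x + t), g y) ≤ u x t := by
  have hsource : 0 ≤ ∫ z in backwardCone x t, waveSource p u z :=
    integral_nonneg fun z => waveSource_nonneg p u z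
  exact (le_add_of_nonneg_right (by positivity)).trans (h x t ht)

theorem IsMildSupersolution.hasLogLowerBound_zero (h : IsMildSupersolution p ε T g u)
    (hε : 0 ≤ ε) (hg : LocallyIntegrable g) (hg_nonneg : ∀ x, 0 ≤ g x) :
    HasLogLowerBound T u (ε * (1 / 2 * ∫ y in (-1 : ℝ)..1, g y)) 0 := by
  intro x t hx ht hxt
  rw [rpow_zero, mul_one]
  calc ε * (1 / 2 * ∫ y in (-1 : ℝ)..1, g y)
      = ε / 2 * ∫ y in (-1 : ℝ)..1, g y := by ring
    _ ≤ ε / 2 * ∫ y in (x - t)..(x + t), g y := by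
        gcongr
        exact intervalIntegral.integral_mono_interval (by linarith) (by norm_num) (by linarith)
          (.of_forall hg_nonneg) (hg.integrableOn_isCompact isCompact_uIcc).intervalIntegrable
    _ ≤ u x t := h.data_le x t ht

end LowerBounds

section Constants

/-- The constant `C_{0,n+1}` of the paper, as a function of `A = C_{0,1}`, `E = E_{p,0}` and
`F = F_{p,0}`; the sum is `S_{n+1}`. -/
noncomputable def iterationConst (p A E F : ℝ) (n : ℕ) : ℝ :=
  exp (p ^ n * log (A * F ^ (-∑ i ∈ Finset.range n, ((i : ℝ) + 1) / p ^ (i + 1)) *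
    E ^ (1 / (p - 1))) - log (E ^ (1 / (p - 1))))

variable {p A E F : ℝ}

theorem iterationConst_pos (p A E F : ℝ) (n : ℕ) : 0 < iterationConst p A E F n :=
  exp_pos _

theorem log_iterationConst (hA : 0 < A) (hE : 0 < E) (hF : 0 < F) (n : ℕ) :
    log (iterationConst p A E F n) =
      p ^ n * (log A - (∑ i ∈ Finset.range n, ((i : ℝ) + 1) / p ^ (i + 1)) * log F +
        log E / (p - 1)) - log E / (p - 1) := by
  rw [iterationConst, log_exp, log_mul (by positivity) (by positivity),
    log_mul hA.ne' (by positivity), log_rpow hF, log_rpow hE]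
  ring

theorem iterationConst_zero (hA : 0 < A) (hE : 0 < E) (hF : 0 < F) :
    iterationConst p A E F 0 = A := by
  refine log_injOn_pos (iterationConst_pos ..) hA ?_
  simp [log_iterationConst hA hE hF]

theorem iterationConst_succ (hp₀ : p ≠ 0) (hp₁ : p ≠ 1) (hA : 0 < A) (hE : 0 < E) (hF : 0 < F)
    (n : ℕ) :
    iterationConst p A E F (n + 1) = E / F ^ (n + 1) * iterationConst p A E F n ^ p := by
  have hpos := iterationConst_pos p A E F n
  have hp_sub : p - 1 ≠ 0 := sub_ne_zero.2 hp₁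
  refine log_injOn_pos (iterationConst_pos ..) (mem_Ioi.2 (by positivity)) ?_
  rw [log_mul (by positivity) (by positivity), log_div (by positivity) (by positivity), log_pow,
    log_rpow hpos, log_iterationConst hA hE hF, log_iterationConst hA hE hF,
    Finset.sum_range_succ]
  push_cast
  field_simp
  ring

theorem mul_pow_sub_one_div_add_one (hp : p ≠ 1) (n : ℕ) :
    p * ((p ^ n - 1) / (p - 1)) + 1 = (p ^ (n + 1) - 1) / (p - 1) := by
  have hp₁ : p - 1 ≠ 0 := sub_ne_zero.2 hp
  field_simp
  ring

theorem iterationFactor_le_inv_sq (hp : 1 < p) (n : ℕ) :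
    (p - 1) ^ 2 / (2 * p ^ 2) / (p ^ 2) ^ n ≤ 1 / (2 * ((p ^ (n + 1) - 1) / (p - 1)) ^ 2) := by
  have hp₁ : 0 < p - 1 := by linarith
  have hpow : 0 < p ^ (n + 1) - 1 := sub_pos.2 (one_lt_pow₀ hp n.succ_ne_zero)
  calc (p - 1) ^ 2 / (2 * p ^ 2) / (p ^ 2) ^ n = 1 / (2 * (p ^ (n + 1) / (p - 1)) ^ 2) := by
        field_simp
        ring
    _ ≤ 1 / (2 * ((p ^ (n + 1) - 1) / (p - 1)) ^ 2) := by
        gcongr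
        linarith

theorem iterationConst_succ_le (hp : 1 < p) (hA : 0 < A) (n : ℕ) :
    iterationConst p A ((p - 1) ^ 2 / (2 * p ^ 2)) (p ^ 2) (n + 1) ≤
      iterationConst p A ((p - 1) ^ 2 / (2 * p ^ 2)) (p ^ 2) n ^ p /
        (2 * ((p ^ (n + 2) - 1) / (p - 1)) ^ 2) := by
  have : 0 < p - 1 := by linarith
  rw [iterationConst_succ (by positivity) hp.ne' hA (by positivity) (by positivity)]
  exact (mul_le_mul_of_nonneg_right (iterationFactor_le_inv_sq hp (n + 1))
    (rpow_nonneg (iterationConst_pos ..).le p)).trans_eq (one_div_mul_eq_div _ _)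

theorem eq_iterationConst (hA : 0 < A) (hE : 0 < E) (hF : 0 < F) {S C : ℕ → ℝ}
    (hS : ∀ j : ℕ, S j = ∑ i ∈ Finset.range (j - 1), ((i : ℝ) + 1) / p ^ (i + 1)) (hC₁ : C 1 = A)
    (hC : ∀ j : ℕ, 2 ≤ j → C j =
      exp (p ^ (j - 1) * log (C 1 * F ^ (-(S j)) * E ^ (1 / (p - 1))) - log (E ^ (1 / (p - 1)))))
    (n : ℕ) : C (n + 1) = iterationConst p A E F n := by
  cases n with
  | zero => rw [iterationConst_zero hA hE hF, zero_add, hC₁]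
  | succ n => rw [hC _ (by omega), hS, hC₁, iterationConst, Nat.add_sub_cancel]

end Constants

theorem hasLogLowerBound_iterationConst {p T K : ℝ} {u : ℝ → ℝ → ℝ} (hp : 1 < p) (hK : 0 < K)
    (hu : ContinuousOn (fun z : ℝ × ℝ => u z.1 z.2) (univ ×ˢ Icc 0 T))
    (hsource : ∀ x t, t ∈ Icc 0 T → 1 / 2 * ∫ z in backwardCone x t, waveSource p u z ≤ u x t)
    (h : HasLogLowerBound T u K 0) (n : ℕ) :
    HasLogLowerBound T u
      (iterationConst p (K ^ p / 2) ((p - 1) ^ 2 / (2 * p ^ 2)) (p ^ 2) n)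
      ((p ^ (n + 1) - 1) / (p - 1)) := by
  have hp₀ : 0 ≤ p := by linarith
  have hp₁ : 0 < p - 1 := by linarith
  induction n with
  | zero =>
    rw [iterationConst_zero (by positivity) (by positivity) (by positivity), zero_add, pow_one,
      div_self hp₁.ne']
    simpa using h.improve hp₀ hK.le le_rfl hu hsource
  | succ n ih =>
    have ha : 0 ≤ (p ^ (n + 1) - 1) / (p - 1) :=
      div_nonneg (sub_nonneg.2 (one_le_pow₀ hp.le)) hp₁.le
    have hnext := ih.improve hp₀ (iterationConst_pos ..).le ha hu hsource
    rw [mul_pow_sub_one_div_add_one hp.ne'] at hnext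
    exact hnext.mono (iterationConst_succ_le hp (by positivity) n)

theorem stmt_9_general (p ε T : ℝ) (hp : 1 < p) (hε : 0 < ε)
    (g : ℝ → ℝ) (hg : LocallyIntegrable g) (hgpos : ∀ x, 0 ≤ g x)
    (hgint : 0 < ∫ y in (-1 : ℝ)..1, g y)
    (c₀ : ℝ) (hc₀ : c₀ = 1 / 2 * ∫ y in (-1 : ℝ)..1, g y)
    (u : ℝ → ℝ → ℝ)
    (hu : ContinuousOn (fun q : ℝ × ℝ => u q.1 q.2) (univ ×ˢ Icc 0 T))
    (hle : ∀ x t : ℝ, t ∈ Icc (0 : ℝ) T →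
      ε / 2 * (∫ y in (x - t)..(x + t), g y)
        + 1 / 2 * (∫ s in (0 : ℝ)..t, ∫ y in (x - t + s)..(x + t - s),
            |u y s| ^ p / (1 + y ^ 2) ^ ((1 : ℝ) / 2)) ≤ u x t)
    (E F k : ℝ) (hE : E = (p - 1) ^ 2 / (2 * p ^ 2))
    (hF : F = p ^ 2) (hk : k = 1 / 2)
    (S : ℕ → ℝ) (hS : ∀ j : ℕ, S j = ∑ i ∈ Finset.range (j - 1), ((i : ℝ) + 1) / p ^ (i + 1))
    (C : ℕ → ℝ) (hC1 : C 1 = c₀ ^ p * k * ε ^ p)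
    (hCj : ∀ j : ℕ, 2 ≤ j →
      C j = exp (p ^ (j - 1) * log (C 1 * F ^ (-(S j)) * E ^ (1 / (p - 1)))
        - log (E ^ (1 / (p - 1))))) :
    ∀ j : ℕ, 1 ≤ j → ∀ x t : ℝ, 0 ≤ x → t ∈ Icc (0 : ℝ) T → 1 ≤ t - x →
      C j * ((t - x - 1) * log (1 + x)) ^ ((p ^ j - 1) / (p - 1)) ≤ u x t := by
  subst hE hF hk hc₀
  set c₀ : ℝ := 1 / 2 * ∫ y in (-1 : ℝ)..1, g y
  have : 0 < p - 1 := by linarith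
  have hεc₀ : 0 < ε * c₀ := by positivity
  have hC1_eq : C 1 = (ε * c₀) ^ p / 2 := by
    rw [hC1, mul_rpow hε.le (by positivity)]
    ring
  have hsuper : IsMildSupersolution p ε T g u := (isMildSupersolution_iff (by linarith) hu).2 hle
  intro j hj
  obtain ⟨n, rfl⟩ := Nat.exists_eq_add_of_le' hj
  rw [eq_iterationConst (by positivity) (by positivity) (by positivity) hS hC1_eq hCj]
  exact hasLogLowerBound_iterationConst hp hεc₀ hu (hsuper.source_le hε.le hgpos)
    (hsuper.hasLogLowerBound_zero hε.le hg hgpos) n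

/-- Iteration estimate in the case `a = 0`: a continuous solution of the integral
equation satisfies `u(x,t) ≥ C_{0,j} {(t-x-1) log(1+x)}^{a_j}` on
`Γ₁ = {(x,t) ∈ [0,∞)×[0,T] : t-x ≥ 1}`, where `a_j = (p^j - 1)/(p-1)`. -/
theorem stmt_9 (p ε T : ℝ) (hp : 1 < p) (hε : 0 < ε) (hT : 0 < T)
    (g : ℝ → ℝ) (hg : ContDiff ℝ 1 g) (hgpos : ∀ x, 0 ≤ g x)
    (hgint : 0 < ∫ y in (-1:ℝ)..1, g y)
    (c₀ : ℝ) (hc₀ : c₀ = 1 / 2 * ∫ y in (-1:ℝ)..1, g y)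
    (u : ℝ → ℝ → ℝ)
    (hu : ContinuousOn (fun q : ℝ × ℝ => u q.1 q.2) (Set.univ ×ˢ Set.Icc 0 T))
    (heq : ∀ x t : ℝ, t ∈ Set.Icc (0:ℝ) T →
      u x t = ε / 2 * (∫ y in (x - t)..(x + t), g y)
        + 1 / 2 * ∫ s in (0:ℝ)..t, ∫ y in (x - t + s)..(x + t - s),
            |u y s| ^ p / (1 + y ^ 2) ^ ((1:ℝ) / 2))
    (E F k : ℝ) (hE : E = (p - 1) ^ 2 / (2 * p ^ 2))
    (hF : F = p ^ 2) (hk : k = 1 / 2)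
    (S : ℕ → ℝ) (hS : ∀ j : ℕ, S j = ∑ i ∈ Finset.range (j - 1), ((i:ℝ) + 1) / p ^ (i + 1))
    (C : ℕ → ℝ) (hC1 : C 1 = c₀ ^ p * k * ε ^ p)
    (hCj : ∀ j : ℕ, 2 ≤ j →
      C j = Real.exp (p ^ (j - 1) * Real.log (C 1 * F ^ (-(S j)) * E ^ (1 / (p - 1)))
        - Real.log (E ^ (1 / (p - 1))))) :
    ∀ j : ℕ, 1 ≤ j → ∀ x t : ℝ, 0 ≤ x → t ∈ Set.Icc (0:ℝ) T → 1 ≤ t - x →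
      C j * ((t - x - 1) * Real.log (1 + x)) ^ ((p ^ j - 1) / (p - 1)) ≤ u x t :=
  stmt_9_general p ε T hp hε g hg.continuous.locallyIntegrable hgpos hgint c₀ hc₀ u hu
    (fun x t ht => (heq x t ht).ge) E F k hE hF hk S hS C hC1 hCj
end

section
/- Let p > 1, a > 0, ε > 0, T > 0. Let g ∈ C¹(ℝ) satisfy g ≥ 0 on ℝ and ∫_{−1}^{1} g(y) dy > 0, and set c₀ = (1/2)∫_{−1}^{1} g(y) dy. Suppose u ∈ C(ℝ×[0,T]) satisfies u(x,t) = (ε/2)∫_{x−t}^{x+t} g(y) dy + (1/2)∬_{D(x,t)} |u(y,s)|^p (1+y²)^{−(1+a)/2} dy ds on ℝ×[0,T]. Then for every j ∈ ℕ (j ≥ 1) and every (x,t) ∈ Σ_j = {(x,t) ∈ [0,∞)×[0,T] : t−x ≥ l_j}, one has u(x,t) ≥ C_{a,j} · (t−x−l_j)^{a_j}, where a_j = (p^j − 1)/(p−1), l_1 = 3, and l_j = 3 + 2(1 − 2^{−(j−1)}) for j ≥ 2. -/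
open MeasureTheory Real Set

/-!
Suppose `u ≥ c (t - x - L) ^ b` wherever `x ≥ 0` and `t - x ≥ L`. If `t - x ≥ L + 2δ`, the backward
cone of `(x, t)` contains the strip `0 ≤ y ≤ δ`, `L + δ ≤ s ≤ t - x - δ`, on which the weight is
bounded below and `u(y, s) ≥ c (s - δ - L) ^ b`. Integrating over this strip improves the lower
bound to a multiple of `δ c ^ p (t - x - (L + 2δ)) ^ (b p + 1)`. Starting from `b = 0`, where the
bound is the contribution of `g`, and taking `δ = 1, 1/2, 1/4, …` keeps the thresholds bounded while
the exponents become `(p ^ j - 1) / (p - 1)`.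
-/

theorem continuousOn_intervalIntegral {X E : Type*} [TopologicalSpace X]
    [FirstCountableTopology X] [NormedAddCommGroup E] [NormedSpace ℝ E]
    {S : Set X} {f : X → ℝ → E} {a b : X → ℝ}
    (hf : ContinuousOn (Function.uncurry f) (S ×ˢ univ))
    (ha : ContinuousOn a S) (hb : ContinuousOn b S) :
    ContinuousOn (fun x ↦ ∫ y in a x..b x, f x y) S := by
  rw [continuousOn_iff_continuous_domRestrict] at ha hb ⊢
  have hf' : Continuous (Function.uncurry fun (x : S) y ↦ f x y) :=
    hf.comp_continuous (f := fun q : S × ℝ ↦ ((q.1 : X), q.2)) (by fun_prop)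
      fun q ↦ ⟨q.1.2, mem_univ _⟩
  have hint (x : S) (c d : ℝ) : IntervalIntegrable (f x) volume c d :=
    (hf'.uncurry_left x).intervalIntegrable c d
  have hsub : S.domRestrict (fun x ↦ ∫ y in a x..b x, f x y) =
      fun x : S ↦ (∫ y in (0 : ℝ)..b x, f x y) - ∫ y in (0 : ℝ)..a x, f x y := by
    funext x
    exact (intervalIntegral.integral_interval_sub_left (hint x _ _) (hint x _ _)).symm
  rw [hsub]
  exact (intervalIntegral.continuous_parametric_intervalIntegral_of_continuous hf' hb).sub
    (intervalIntegral.continuous_parametric_intervalIntegral_of_continuous hf' ha)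

/-- The integral of `W` over the backward light cone `D(x, t)`, as an iterated integral whose outer
variable is time; `W y s` is the value at position `y` and time `s`. -/
noncomputable def coneIntegral (W : ℝ → ℝ → ℝ) (x t : ℝ) : ℝ :=
  ∫ s in (0 : ℝ)..t, ∫ y in (x - t + s)..(x + t - s), W y s

section coneIntegral

variable {W : ℝ → ℝ → ℝ} {x t : ℝ}

theorem coneIntegral_nonneg (ht : 0 ≤ t) (hW : ∀ y, ∀ s ∈ Icc 0 t, 0 ≤ W y s) :
    0 ≤ coneIntegral W x t :=
  intervalIntegral.integral_nonneg ht fun s hs ↦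
    intervalIntegral.integral_nonneg (by linarith [hs.2]) fun y _ ↦ hW y s hs

theorem mul_integral_le_coneIntegral {α β s₁ s₂ : ℝ} {m : ℝ → ℝ}
    (hWc : ContinuousOn (Function.uncurry W) (univ ×ˢ Icc 0 t))
    (hW : ∀ y, ∀ s ∈ Icc 0 t, 0 ≤ W y s)
    (hs₁ : 0 ≤ s₁) (hs : s₁ ≤ s₂) (hαβ : α ≤ β) (hα : x - t + s₂ ≤ α) (hβ : β ≤ x + t - s₂)
    (hm : IntervalIntegrable m volume s₁ s₂)
    (hmW : ∀ s ∈ Icc s₁ s₂, ∀ y ∈ Icc α β, m s ≤ W y s) :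
    (β - α) * ∫ s in s₁..s₂, m s ≤ coneIntegral W x t := by
  have hs₂ : s₂ ≤ t := by linarith
  have hslice (s : ℝ) (hst : s ∈ Icc 0 t) (c d : ℝ) :
      IntervalIntegrable (fun y ↦ W y s) volume c d :=
    (hWc.comp_continuous (f := fun y : ℝ ↦ (y, s)) (by fun_prop)
      fun y ↦ ⟨mem_univ y, hst⟩).intervalIntegrable c d
  have hcont : ContinuousOn (fun s ↦ ∫ y in (x - t + s)..(x + t - s), W y s) (Icc 0 t) :=
    continuousOn_intervalIntegral (f := fun s y ↦ W y s)
      (hWc.comp continuous_swap.continuousOn fun _ hq ↦ ⟨mem_univ _, hq.1⟩)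
      (by fun_prop) (by fun_prop)
  have hint : IntervalIntegrable (fun s ↦ ∫ y in (x - t + s)..(x + t - s), W y s) volume 0 t :=
    hcont.intervalIntegrable_of_Icc (by linarith)
  have hsub : Icc s₁ s₂ ⊆ Icc 0 t := Icc_subset_Icc hs₁ hs₂
  have hinner (s : ℝ) (hs' : s ∈ Icc s₁ s₂) :
      (β - α) * m s ≤ ∫ y in (x - t + s)..(x + t - s), W y s :=
    calc (β - α) * m s = ∫ _ in α..β, m s := by simp
      _ ≤ ∫ y in α..β, W y s :=
        intervalIntegral.integral_mono_on hαβ (by simp) (hslice s (hsub hs') _ _) (hmW s hs')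
      _ ≤ ∫ y in (x - t + s)..(x + t - s), W y s :=
        intervalIntegral.integral_mono_interval (by linarith [hs'.2]) hαβ (by linarith [hs'.2])
          (Filter.Eventually.of_forall fun y ↦ hW y s (hsub hs')) (hslice s (hsub hs') _ _)
  calc (β - α) * ∫ s in s₁..s₂, m s = ∫ s in s₁..s₂, (β - α) * m s := by
        rw [intervalIntegral.integral_const_mul]
    _ ≤ ∫ s in s₁..s₂, ∫ y in (x - t + s)..(x + t - s), W y s :=
      intervalIntegral.integral_mono_on hs (hm.const_mul _)
        ((hcont.mono hsub).intervalIntegrable_of_Icc hs) hinner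
    _ ≤ coneIntegral W x t :=
      intervalIntegral.integral_mono_interval hs₁ hs hs₂
        ((ae_restrict_mem measurableSet_Ioc).mono fun s hs' ↦
          intervalIntegral.integral_nonneg (by linarith [hs'.2])
            fun y _ ↦ hW y s (Ioc_subset_Icc_self hs')) hint

end coneIntegral

theorem integral_const_mul_sub_rpow_rpow {c d r b p : ℝ} (hc : 0 ≤ c) (hdr : d ≤ r)
    (hbp : -1 < b * p) :
    ∫ s in d..r, (c * (s - d) ^ b) ^ p = c ^ p * ((r - d) ^ (b * p + 1) / (b * p + 1)) := by
  have hcongr : ∫ s in d..r, (c * (s - d) ^ b) ^ p = ∫ s in d..r, c ^ p * (s - d) ^ (b * p) := by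
    refine intervalIntegral.integral_congr fun s hs ↦ ?_
    rw [uIcc_of_le hdr] at hs
    have hsd : 0 ≤ s - d := sub_nonneg.2 hs.1
    simp only [mul_rpow hc (rpow_nonneg hsd b), rpow_mul hsd]
  rw [hcongr, intervalIntegral.integral_const_mul,
    intervalIntegral.integral_comp_sub_right (fun s ↦ s ^ (b * p)), integral_rpow (Or.inl hbp),
    sub_self, zero_rpow (by linarith), sub_zero]

/-- Mild supersolutions on `ℝ × [0, T]` of `∂ₜ²u - ∂ₓ²u = w(x) |u| ^ p` with zero Cauchy data;
by d'Alembert's formula the source is integrated over backward cones with the factor `1 / 2`. -/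
structure IsMildSupersolution_s10 (p T : ℝ) (w : ℝ → ℝ) (u : ℝ → ℝ → ℝ) : Prop where
  continuousOn : ContinuousOn (Function.uncurry u) (univ ×ˢ Icc 0 T)
  coneIntegral_le : ∀ x, ∀ t ∈ Icc 0 T,
    1 / 2 * coneIntegral (fun y s ↦ |u y s| ^ p * w y) x t ≤ u x t

/-- The lower bound `u(x, t) ≥ c (t - x - L) ^ b` on `{(x, t) ∈ [0, ∞) × [0, T] : t - x ≥ L}`, the
form of estimate that the iteration propagates. -/
def HasPowerLowerBound (T : ℝ) (u : ℝ → ℝ → ℝ) (c L b : ℝ) : Prop :=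
  ∀ x t, 0 ≤ x → t ∈ Icc 0 T → L ≤ t - x → c * (t - x - L) ^ b ≤ u x t

theorem HasPowerLowerBound.mono {T c c' L b : ℝ} {u : ℝ → ℝ → ℝ}
    (h : HasPowerLowerBound T u c L b) (hc : c' ≤ c) : HasPowerLowerBound T u c' L b :=
  fun x t hx ht hL ↦
    (mul_le_mul_of_nonneg_right hc (rpow_nonneg (sub_nonneg.2 hL) b)).trans (h x t hx ht hL)

/-- Closed form of the constants of the iteration, indexed from `0`: the solution of
`C (n + 1) = C n ^ p * E / F ^ (n + 1)` with `C 0 = C₁`, for positive `C₁`, `E`, `F` and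
`p ≠ 0, 1`. -/
noncomputable def iterConst (p C₁ E F : ℝ) (n : ℕ) : ℝ :=
  exp (p ^ n * log (C₁ * F ^ (-∑ i ∈ Finset.range n, ((i : ℝ) + 1) / p ^ (i + 1)) *
    E ^ (1 / (p - 1))) - log (E ^ (1 / (p - 1))))

section iterConst

variable {p C₁ E F : ℝ}

theorem iterConst_pos (n : ℕ) : 0 < iterConst p C₁ E F n :=
  exp_pos _

theorem log_iterConst (hC₁ : 0 < C₁) (hE : 0 < E) (hF : 0 < F) (n : ℕ) :
    log (iterConst p C₁ E F n) =
      p ^ n * (log C₁ - (∑ i ∈ Finset.range n, ((i : ℝ) + 1) / p ^ (i + 1)) * log F +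
        log E / (p - 1)) - log E / (p - 1) := by
  rw [iterConst, log_exp, log_mul (by positivity) (by positivity),
    log_mul (by positivity) (by positivity), log_rpow hF, log_rpow hE]
  ring

theorem iterConst_zero (hC₁ : 0 < C₁) (hE : 0 < E) (hF : 0 < F) : iterConst p C₁ E F 0 = C₁ :=
  log_injOn_pos (iterConst_pos 0) hC₁ <| by simp [log_iterConst hC₁ hE hF]

theorem iterConst_succ (hp₀ : p ≠ 0) (hp₁ : p ≠ 1) (hC₁ : 0 < C₁) (hE : 0 < E) (hF : 0 < F)
    (n : ℕ) : iterConst p C₁ E F (n + 1) = iterConst p C₁ E F n ^ p * E / F ^ (n + 1) := by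
  have hn : 0 < iterConst p C₁ E F n := iterConst_pos n
  have hpos : 0 < iterConst p C₁ E F n ^ p * E / F ^ (n + 1) := by positivity
  have hp₁' : p - 1 ≠ 0 := sub_ne_zero.2 hp₁
  refine log_injOn_pos (iterConst_pos (n + 1)) hpos ?_
  rw [log_div (by positivity) (by positivity), log_mul (by positivity) hE.ne', log_rpow hn,
    log_pow, log_iterConst hC₁ hE hF, log_iterConst hC₁ hE hF, Finset.sum_range_succ]
  push_cast
  field_simp
  ring

end iterConst

theorem sub_one_div_div_two_mul_pow_le {p : ℝ} (hp : 1 < p) (n : ℕ) :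
    (p - 1) / p / (2 * p) ^ n ≤ (1 / 2) ^ n / ((p ^ (n + 1) - 1) / (p - 1)) := by
  have hp₁ : 0 < p - 1 := sub_pos.2 hp
  have hpow : 1 < p ^ (n + 1) := one_lt_pow₀ hp n.succ_ne_zero
  calc (p - 1) / p / (2 * p) ^ n = (1 / 2) ^ n * ((p - 1) / p ^ (n + 1)) := by
        rw [mul_pow, one_div, inv_pow]
        field_simp
        ring
    _ ≤ (1 / 2) ^ n * ((p - 1) / (p ^ (n + 1) - 1)) := by
        gcongr
        linarith
    _ = (1 / 2) ^ n / ((p ^ (n + 1) - 1) / (p - 1)) := by rw [div_div_eq_mul_div, mul_div_assoc]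

namespace IsMildSupersolution_s10

variable {p T : ℝ} {w : ℝ → ℝ} {u : ℝ → ℝ → ℝ}

theorem mul_integral_rpow_le (hu : IsMildSupersolution_s10 p T w u) (hp : 0 ≤ p)
    (hw : Continuous w) (hw₀ : ∀ y, 0 ≤ w y) {x t α β s₁ s₂ κ : ℝ} {v : ℝ → ℝ}
    (ht : t ∈ Icc 0 T) (hs₁ : 0 ≤ s₁) (hs : s₁ ≤ s₂) (hαβ : α ≤ β)
    (hα : x - t + s₂ ≤ α) (hβ : β ≤ x + t - s₂) (hκ : 0 ≤ κ) (hκw : ∀ y ∈ Icc α β, 2 * κ ≤ w y)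
    (hv : ContinuousOn v (Icc s₁ s₂)) (hv₀ : ∀ s ∈ Icc s₁ s₂, 0 ≤ v s)
    (hvu : ∀ s ∈ Icc s₁ s₂, ∀ y ∈ Icc α β, v s ≤ u y s) :
    κ * (β - α) * ∫ s in s₁..s₂, v s ^ p ≤ u x t := by
  have hcont : ContinuousOn (Function.uncurry fun y s ↦ |u y s| ^ p * w y) (univ ×ˢ Icc 0 t) :=
    ((hu.continuousOn.mono (prod_mono_right (Icc_subset_Icc_right ht.2))).abs.rpow_const
      fun _ _ ↦ Or.inr hp).mul (hw.comp continuous_fst).continuousOn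
  have hcone : (β - α) * ∫ s in s₁..s₂, 2 * κ * v s ^ p ≤
      coneIntegral (fun y s ↦ |u y s| ^ p * w y) x t := by
    refine mul_integral_le_coneIntegral hcont (fun y s _ ↦ by have := hw₀ y; positivity)
      hs₁ hs hαβ hα hβ ?_ fun s hs' y hy ↦ ?_
    · exact ((hv.rpow_const fun _ _ ↦ Or.inr hp).const_mul (2 * κ)).intervalIntegrable_of_Icc hs
    · have hvu' : v s ^ p ≤ |u y s| ^ p :=
        rpow_le_rpow (hv₀ s hs') ((hvu s hs' y hy).trans (le_abs_self _)) hp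
      rw [mul_comm]
      exact mul_le_mul hvu' (hκw y hy) (by positivity) (by positivity)
  rw [intervalIntegral.integral_const_mul] at hcone
  linarith [hu.coneIntegral_le x t ht]

theorem hasPowerLowerBound_step (hu : IsMildSupersolution_s10 p T w u) (hp : 0 ≤ p)
    (hw : Continuous w) (hw₀ : ∀ y, 0 ≤ w y) {c L b δ κ : ℝ} (hc : 0 ≤ c) (hL : 0 ≤ L)
    (hb : 0 ≤ b) (hδ : 0 ≤ δ) (hκ : 0 ≤ κ) (hκw : ∀ y ∈ Icc 0 δ, 2 * κ ≤ w y)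
    (h : HasPowerLowerBound T u c L b) :
    HasPowerLowerBound T u (κ * δ * (c ^ p / (b * p + 1))) (L + 2 * δ) (b * p + 1) := by
  intro x t hx ht hxt
  have hlower : ∀ s ∈ Icc (L + δ) (t - x - δ), ∀ y ∈ Icc 0 δ,
      c * (s - (L + δ)) ^ b ≤ u y s := fun s hs y hy ↦
    calc c * (s - (L + δ)) ^ b ≤ c * (s - y - L) ^ b := by
          refine mul_le_mul_of_nonneg_left (rpow_le_rpow (sub_nonneg.2 hs.1) ?_ hb) hc
          linarith [hy.2]
      _ ≤ u y s := h y s hy.1 ⟨by linarith [hs.1], by linarith [hs.2, ht.2]⟩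
          (by linarith [hs.1, hy.2])
  have hstrip := hu.mul_integral_rpow_le hp hw hw₀ (x := x) ht (add_nonneg hL hδ) (by linarith) hδ
    (by linarith) (by linarith) hκ hκw
    (Continuous.continuousOn (by fun_prop (disch := exact hb)))
    (fun s hs ↦ mul_nonneg hc (rpow_nonneg (sub_nonneg.2 hs.1) b)) hlower
  rw [integral_const_mul_sub_rpow_rpow hc (by linarith) (by nlinarith)] at hstrip
  refine le_of_eq_of_le ?_ hstrip
  rw [show t - x - δ - (L + δ) = t - x - (L + 2 * δ) by ring]
  ring

theorem hasPowerLowerBound_iterate (hu : IsMildSupersolution_s10 p T w u) (hp : 1 < p)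
    (hw : Continuous w) (hw₀ : ∀ y, 0 ≤ w y) {A L κ : ℝ} (hA : 0 < A) (hL : 0 ≤ L)
    (hκ : 0 < κ) (hκw : ∀ y ∈ Icc 0 1, 2 * κ ≤ w y) (h : HasPowerLowerBound T u A L 0) (n : ℕ) :
    HasPowerLowerBound T u (iterConst p (κ * A ^ p) (κ * ((p - 1) / p)) (2 * p) n)
      (L + 2 + 2 * (1 - (1 / 2) ^ n)) ((p ^ (n + 1) - 1) / (p - 1)) := by
  have hp₀ : 0 < p := one_pos.trans hp
  have hp₁ : 0 < p - 1 := sub_pos.2 hp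
  have hC₁ : 0 < κ * A ^ p := by positivity
  have hE : 0 < κ * ((p - 1) / p) := by positivity
  have hF : 0 < 2 * p := by positivity
  induction n with
  | zero =>
    have h₁ := hu.hasPowerLowerBound_step hp₀.le hw hw₀ hA.le hL le_rfl zero_le_one hκ.le hκw h
    rw [iterConst_zero hC₁ hE hF]
    simpa [div_self hp₁.ne'] using h₁
  | succ n ih =>
    set c := iterConst p (κ * A ^ p) (κ * ((p - 1) / p)) (2 * p) n
    set δ : ℝ := (1 / 2) ^ (n + 1) with hδ
    have hc : 0 < c := iterConst_pos n
    have hδ₁ : δ ≤ 1 := pow_le_one₀ (by norm_num) (by norm_num)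
    have hhalf : ((1 : ℝ) / 2) ^ n ≤ 1 := pow_le_one₀ (by norm_num) (by norm_num)
    have hpow : 1 ≤ p ^ (n + 1) := one_le_pow₀ hp.le
    have hstep := hu.hasPowerLowerBound_step hp₀.le hw hw₀ hc.le (by linarith)
      (div_nonneg (sub_nonneg.2 hpow) hp₁.le) (by positivity : 0 ≤ δ) hκ.le
      (fun y hy ↦ hκw y ⟨hy.1, hy.2.trans hδ₁⟩) ih
    have hexp : (p ^ (n + 1) - 1) / (p - 1) * p + 1 = (p ^ (n + 1 + 1) - 1) / (p - 1) := by
      field_simp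
      ring
    have hthreshold : L + 2 + 2 * (1 - (1 / 2) ^ n) + 2 * δ = L + 2 + 2 * (1 - δ) := by
      rw [hδ, pow_succ]
      ring
    rw [hexp, hthreshold] at hstep
    refine hstep.mono ?_
    rw [iterConst_succ hp₀.ne' hp.ne' hC₁ hE hF]
    calc c ^ p * (κ * ((p - 1) / p)) / (2 * p) ^ (n + 1)
        = κ * c ^ p * ((p - 1) / p / (2 * p) ^ (n + 1)) := by ring
      _ ≤ κ * c ^ p * (δ / ((p ^ (n + 1 + 1) - 1) / (p - 1))) :=
        mul_le_mul_of_nonneg_left (sub_one_div_div_two_mul_pow_le hp (n + 1)) (by positivity)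
      _ = κ * δ * (c ^ p / ((p ^ (n + 1 + 1) - 1) / (p - 1))) := by ring

end IsMildSupersolution_s10

theorem two_rpow_neg_le_inv_one_add_sq_rpow {r y : ℝ} (hr : 0 ≤ r) (hy : y ∈ Icc 0 1) :
    (2 : ℝ) ^ (-r) ≤ ((1 + y ^ 2) ^ (r / 2))⁻¹ := by
  rw [rpow_neg zero_le_two]
  gcongr
  calc (1 + y ^ 2) ^ (r / 2) ≤ 2 ^ (r / 2) := by
        gcongr
        nlinarith [hy.1, hy.2]
    _ ≤ 2 ^ r := rpow_le_rpow_of_exponent_le one_le_two (half_le_self hr)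

theorem hasPowerLowerBound_of_dAlembert_le {ε T : ℝ} {g : ℝ → ℝ} {u : ℝ → ℝ → ℝ} (hε : 0 ≤ ε)
    (hg : LocallyIntegrable g) (hg₀ : ∀ y, 0 ≤ g y)
    (h : ∀ x, ∀ t ∈ Icc 0 T, ε / 2 * ∫ y in (x - t)..(x + t), g y ≤ u x t) :
    HasPowerLowerBound T u (ε * (1 / 2 * ∫ y in (-1 : ℝ)..1, g y)) 1 0 := by
  intro x t hx ht hxt
  rw [rpow_zero, mul_one]
  calc ε * (1 / 2 * ∫ y in (-1 : ℝ)..1, g y) = ε / 2 * ∫ y in (-1 : ℝ)..1, g y := by ring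
    _ ≤ ε / 2 * ∫ y in (x - t)..(x + t), g y := by
        gcongr
        exact intervalIntegral.integral_mono_interval (by linarith) (by norm_num) (by linarith)
          (Filter.Eventually.of_forall hg₀)
          (hg.integrableOn_isCompact isCompact_uIcc).intervalIntegrable
    _ ≤ u x t := h x t ht

theorem hasPowerLowerBound_of_dAlembert_add_coneIntegral_le {p a ε T : ℝ} {g : ℝ → ℝ}
    {u : ℝ → ℝ → ℝ} (hp : 1 < p) (ha : -1 ≤ a) (hε : 0 < ε)
    (hg : LocallyIntegrable g) (hg₀ : ∀ y, 0 ≤ g y) (hgint : 0 < ∫ y in (-1 : ℝ)..1, g y)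
    (hu : ContinuousOn (Function.uncurry u) (univ ×ˢ Icc 0 T))
    (hle : ∀ x, ∀ t ∈ Icc 0 T, ε / 2 * (∫ y in (x - t)..(x + t), g y) +
      1 / 2 * coneIntegral (fun y s ↦ |u y s| ^ p / (1 + y ^ 2) ^ ((1 + a) / 2)) x t ≤ u x t)
    (n : ℕ) :
    HasPowerLowerBound T u
      (iterConst p (2 ^ (-(a + 2)) * (ε * (1 / 2 * ∫ y in (-1 : ℝ)..1, g y)) ^ p)
        (2 ^ (-(a + 2)) * ((p - 1) / p)) (2 * p) n)
      (3 + 2 * (1 - (1 / 2) ^ n)) ((p ^ (n + 1) - 1) / (p - 1)) := by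
  have hcone : ∀ x, ∀ t ∈ Icc 0 T,
      0 ≤ coneIntegral (fun y s ↦ |u y s| ^ p / (1 + y ^ 2) ^ ((1 + a) / 2)) x t :=
    fun x t ht ↦ coneIntegral_nonneg ht.1 fun y s _ ↦ by positivity
  have hfree : ∀ x, ∀ t ∈ Icc 0 T, 0 ≤ ε / 2 * ∫ y in (x - t)..(x + t), g y := fun x t ht ↦
    mul_nonneg (by positivity)
      (intervalIntegral.integral_nonneg (by linarith [ht.1]) fun y _ ↦ hg₀ y)
  have hsuper : IsMildSupersolution_s10 p T (fun y ↦ ((1 + y ^ 2) ^ ((1 + a) / 2))⁻¹) u :=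
    ⟨hu, fun x t ht ↦ by
      simp only [← div_eq_mul_inv]
      linarith [hle x t ht, hfree x t ht]⟩
  have hbase : HasPowerLowerBound T u (ε * (1 / 2 * ∫ y in (-1 : ℝ)..1, g y)) 1 0 :=
    hasPowerLowerBound_of_dAlembert_le hε.le hg hg₀ fun x t ht ↦ by
      linarith [hle x t ht, hcone x t ht]
  have hcont : Continuous fun y : ℝ ↦ ((1 + y ^ 2) ^ ((1 + a) / 2))⁻¹ :=
    (Continuous.rpow_const (by fun_prop) fun y ↦ Or.inl (by positivity)).inv₀
      fun y ↦ by positivity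
  have hweight : ∀ y ∈ Icc (0 : ℝ) 1,
      2 * 2 ^ (-(a + 2)) ≤ ((1 + y ^ 2) ^ ((1 + a) / 2))⁻¹ := fun y hy ↦
    calc (2 : ℝ) * 2 ^ (-(a + 2)) = 2 ^ (-(1 + a)) := by
          rw [mul_comm, ← rpow_add_one two_ne_zero]
          ring_nf
      _ ≤ ((1 + y ^ 2) ^ ((1 + a) / 2))⁻¹ :=
          two_rpow_neg_le_inv_one_add_sq_rpow (by linarith) hy
  convert hsuper.hasPowerLowerBound_iterate hp hcont (fun y ↦ by positivity) (by positivity)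
    zero_le_one (by positivity) hweight hbase n using 1
  norm_num

theorem stmt_10_general {p a ε T : ℝ} (hp : 1 < p) (ha : -1 ≤ a) (hε : 0 < ε)
    {g : ℝ → ℝ} (hg : LocallyIntegrable g) (hgpos : ∀ x, 0 ≤ g x)
    (hgint : 0 < ∫ y in (-1 : ℝ)..1, g y)
    {c₀ : ℝ} (hc₀ : c₀ = 1 / 2 * ∫ y in (-1 : ℝ)..1, g y)
    {u : ℝ → ℝ → ℝ} (hu : ContinuousOn (fun q : ℝ × ℝ ↦ u q.1 q.2) (univ ×ˢ Icc 0 T))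
    (hle : ∀ x t : ℝ, t ∈ Icc 0 T →
      ε / 2 * (∫ y in (x - t)..(x + t), g y)
        + 1 / 2 * ∫ s in (0 : ℝ)..t, ∫ y in (x - t + s)..(x + t - s),
            |u y s| ^ p / (1 + y ^ 2) ^ ((1 + a) / 2) ≤ u x t)
    {E F k : ℝ} (hE : E = (p - 1) / ((2 : ℝ) ^ (a + 2) * p))
    (hF : F = 2 * p) (hk : k = (2 : ℝ) ^ (-(a + 2)))
    {S : ℕ → ℝ} (hS : ∀ j, S j = ∑ i ∈ Finset.range (j - 1), ((i : ℝ) + 1) / p ^ (i + 1))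
    {C : ℕ → ℝ} (hC1 : C 1 = c₀ ^ p * k * ε ^ p)
    (hCj : ∀ j, 2 ≤ j →
      C j = exp (p ^ (j - 1) * log (C 1 * F ^ (-(S j)) * E ^ (1 / (p - 1)))
        - log (E ^ (1 / (p - 1)))))
    {l : ℕ → ℝ} (hl1 : l 1 = 3)
    (hlj : ∀ j, 2 ≤ j → l j = 3 + 2 * (1 - ((1 : ℝ) / 2) ^ (j - 1)))
    {j : ℕ} (hj : 1 ≤ j) {x t : ℝ} (hx : 0 ≤ x) (ht : t ∈ Icc 0 T) (hlt : l j ≤ t - x) :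
    C j * (t - x - l j) ^ ((p ^ j - 1) / (p - 1)) ≤ u x t := by
  have hk₀ : 0 < k := by rw [hk]; positivity
  have hp₁ : 0 < p - 1 := sub_pos.2 hp
  have hC₁ : C 1 = k * (ε * c₀) ^ p := by
    rw [hC1, mul_rpow hε.le (by rw [hc₀]; positivity)]
    ring
  have hE' : E = k * ((p - 1) / p) := by
    rw [hE, hk, rpow_neg zero_le_two]
    field_simp
  obtain ⟨n, rfl⟩ := Nat.exists_eq_add_of_le' hj
  have hl : l (n + 1) = 3 + 2 * (1 - (1 / 2) ^ n) := by
    rcases n with _ | n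
    · simp [hl1]
    · exact hlj _ (by lia)
  have hC : C (n + 1) = iterConst p (C 1) E F n := by
    rcases n with _ | n
    · have hC₁pos : 0 < C 1 := by rw [hC₁, hc₀]; positivity
      rw [iterConst_zero hC₁pos (by rw [hE']; positivity) (by rw [hF]; positivity)]
    · rw [hCj _ (by lia), hS]
      rfl
  have hbound := hasPowerLowerBound_of_dAlembert_add_coneIntegral_le hp ha hε hg hgpos hgint hu
    hle n
  rw [← hk, ← hc₀, ← hC₁, ← hE', ← hF, ← hC, ← hl] at hbound
  exact hbound x t hx ht hlt

/-- Iteration estimate in the case `a > 0`: a continuous solution of the integral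
equation satisfies `u(x,t) ≥ C_{a,j} (t-x-l_j)^{a_j}` on
`Σ_j = {(x,t) ∈ [0,∞)×[0,T] : t-x ≥ l_j}`, where `a_j = (p^j - 1)/(p-1)`,
`l_1 = 3` and `l_j = 3 + 2(1 - 2^{-(j-1)})` for `j ≥ 2`. -/
theorem stmt_10 (p a ε T : ℝ) (hp : 1 < p) (ha : 0 < a) (hε : 0 < ε) (hT : 0 < T)
    (g : ℝ → ℝ) (hg : ContDiff ℝ 1 g) (hgpos : ∀ x, 0 ≤ g x)
    (hgint : 0 < ∫ y in (-1:ℝ)..1, g y)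
    (c₀ : ℝ) (hc₀ : c₀ = 1 / 2 * ∫ y in (-1:ℝ)..1, g y)
    (u : ℝ → ℝ → ℝ)
    (hu : ContinuousOn (fun q : ℝ × ℝ => u q.1 q.2) (Set.univ ×ˢ Set.Icc 0 T))
    (heq : ∀ x t : ℝ, t ∈ Set.Icc (0:ℝ) T →
      u x t = ε / 2 * (∫ y in (x - t)..(x + t), g y)
        + 1 / 2 * ∫ s in (0:ℝ)..t, ∫ y in (x - t + s)..(x + t - s),
            |u y s| ^ p / (1 + y ^ 2) ^ ((1 + a) / 2))
    (E F k : ℝ) (hE : E = (p - 1) / ((2:ℝ) ^ (a + 2) * p))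
    (hF : F = 2 * p) (hk : k = (2:ℝ) ^ (-(a + 2)))
    (S : ℕ → ℝ) (hS : ∀ j : ℕ, S j = ∑ i ∈ Finset.range (j - 1), ((i:ℝ) + 1) / p ^ (i + 1))
    (C : ℕ → ℝ) (hC1 : C 1 = c₀ ^ p * k * ε ^ p)
    (hCj : ∀ j : ℕ, 2 ≤ j →
      C j = Real.exp (p ^ (j - 1) * Real.log (C 1 * F ^ (-(S j)) * E ^ (1 / (p - 1)))
        - Real.log (E ^ (1 / (p - 1)))))
    (l : ℕ → ℝ) (hl1 : l 1 = 3)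
    (hlj : ∀ j : ℕ, 2 ≤ j → l j = 3 + 2 * (1 - ((1:ℝ) / 2) ^ (j - 1))) :
    ∀ j : ℕ, 1 ≤ j → ∀ x t : ℝ, 0 ≤ x → t ∈ Set.Icc (0:ℝ) T → l j ≤ t - x →
      C j * (t - x - l j) ^ ((p ^ j - 1) / (p - 1)) ≤ u x t := by
  exact fun _ hj _ _ hx ht hlt ↦ stmt_10_general hp (by linarith) hε
    hg.continuous.locallyIntegrable hgpos hgint hc₀ hu (fun x t ht ↦ (heq x t ht).ge)
    hE hF hk hS hC1 hCj hl1 hlj hj hx ht hlt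
end

section
/- Let p > 1, a ≥ −1, ε > 0, T > 0. Let F(u) = |u|^{p−1}u or |u|^p, let f ∈ C²(ℝ) with ‖f‖_{L∞(ℝ)} < ∞, g ∈ C¹(ℝ) with ‖g‖_{L¹(ℝ)} < ∞, and set M = ‖f‖_{L∞(ℝ)} + ‖g‖_{L¹(ℝ)}. Let C_a be a constant such that ‖L(V·(1+|·|²)^{−(1+a)/2})‖_{L∞(ℝ×[0,T])} ≤ C_a D(T) ‖V‖_{L∞(ℝ×[0,T])} for all bounded continuous V. Define the Picard iterates u₀ = ε·u⁰ and u_n = ε·u⁰ + L(F(u_{n−1})·(1+|·|²)^{−(1+a)/2}) for n ≥ 1. If 2^{p+1}·p·C_a·D(T)·M^{p−1}·ε^{p−1} ≤ 1, then ‖u_n‖_{L∞(ℝ×[0,T])} ≤ 2Mε for all n ≥ 0. -/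
open MeasureTheory Real Set

/-! The ball of radius `2Mε` in `L^∞(ℝ × [0,T])` is invariant under the Picard map: the free wave
`ε u⁰` contributes at most `Mε` (d'Alembert's formula), and since `|F s| = |s| ^ p` the Duhamel term
contributes at most `C_a D(T) (2Mε) ^ p`, which the smallness condition makes at most `Mε`. The
hypothesis on `C_a` concerns continuous sources only, so the iterates must be shown continuous. -/

/-- D'Alembert's solution `u⁰` of the free wave equation with data `(f, g)`. -/
noncomputable def dAlembert (f g : ℝ → ℝ) (x t : ℝ) : ℝ :=
  (f (x + t) + f (x - t)) / 2 + 1 / 2 * ∫ y in (x - t)..(x + t), g y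

/-- The Duhamel operator `L`, which solves the wave equation with source `V` and zero data; the
integral over the backward triangle `D(x, t)` is written as an iterated integral. -/
noncomputable def duhamel (V : ℝ → ℝ → ℝ) (x t : ℝ) : ℝ :=
  1 / 2 * ∫ s in (0 : ℝ)..t, ∫ y in (x - t + s)..(x + t - s), V y s

/-- `K` bounds the weighted Duhamel operator `V ↦ L(V / w)` in `L^∞(ℝ × [0,T])`, on bounded
continuous sources. -/
def IsDuhamelBound (w : ℝ → ℝ) (T K : ℝ) : Prop :=
  ∀ V : ℝ → ℝ → ℝ, ContinuousOn (fun q : ℝ × ℝ => V q.1 q.2) (univ ×ˢ Icc 0 T) →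
    ∀ B : ℝ, (∀ x t : ℝ, t ∈ Icc (0 : ℝ) T → |V x t| ≤ B) →
      ∀ x t : ℝ, t ∈ Icc (0 : ℝ) T → |duhamel (fun y s => V y s / w y) x t| ≤ K * B

/-- `F` is one of the two power nonlinearities `|u| ^ (p - 1) u` and `|u| ^ p`. -/
def IsPowerNonlinearity (p : ℝ) (F : ℝ → ℝ) : Prop :=
  (∀ s : ℝ, F s = |s| ^ (p - 1) * s) ∨ ∀ s : ℝ, F s = |s| ^ p

section IntervalIntegral

variable {E : Type*} [NormedAddCommGroup E] [NormedSpace ℝ E] {μ : Measure ℝ}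

lemma continuous_intervalIntegral_of_continuous_endpoints {X : Type*} [TopologicalSpace X]
    [IsLocallyFiniteMeasure μ] [NullSingletonClass μ] {h : X → ℝ → E}
    (hh : Continuous (Function.uncurry h)) {b c : X → ℝ} (hb : Continuous b) (hc : Continuous c) :
    Continuous fun x => ∫ y in (b x)..(c x), h x y ∂μ := by
  have integral_eq_sub (x : X) : ∫ y in (b x)..(c x), h x y ∂μ =
      (∫ y in (0 : ℝ)..(c x), h x y ∂μ) - ∫ y in (0 : ℝ)..(b x), h x y ∂μ :=
    have hx : Continuous (h x) := hh.comp (by fun_prop : Continuous fun y : ℝ => (x, y))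
    (intervalIntegral.integral_interval_sub_left (hx.intervalIntegrable _ _)
      (hx.intervalIntegrable _ _)).symm
  simp only [integral_eq_sub]
  exact (intervalIntegral.continuous_parametric_intervalIntegral_of_continuous hh hc).sub
    (intervalIntegral.continuous_parametric_intervalIntegral_of_continuous hh hb)

lemma norm_intervalIntegral_le_integral_norm {g : ℝ → E} (hg : Integrable g μ) (b c : ℝ) :
    ‖∫ y in b..c, g y ∂μ‖ ≤ ∫ y, ‖g y‖ ∂μ :=
  intervalIntegral.norm_integral_le_integral_norm_uIoc.trans
    (setIntegral_le_integral hg.norm (.of_forall fun _ => norm_nonneg _))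

end IntervalIntegral

section WaveEquation

variable {f g : ℝ → ℝ}

lemma continuous_dAlembert (hf : Continuous f) (hg : ∀ b c, IntervalIntegrable g volume b c) :
    Continuous fun q : ℝ × ℝ => dAlembert f g q.1 q.2 := by
  have hprim : Continuous fun c => ∫ y in (0 : ℝ)..c, g y :=
    intervalIntegral.continuous_primitive hg 0
  have integral_eq_sub (q : ℝ × ℝ) : ∫ y in (q.1 - q.2)..(q.1 + q.2), g y =
      (∫ y in (0 : ℝ)..(q.1 + q.2), g y) - ∫ y in (0 : ℝ)..(q.1 - q.2), g y :=
    (intervalIntegral.integral_interval_sub_left (hg _ _) (hg _ _)).symm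
  simp only [dAlembert, integral_eq_sub]
  fun_prop

lemma abs_dAlembert_le (hf : BddAbove (range fun x => |f x|)) (hg : Integrable g) (x t : ℝ) :
    |dAlembert f g x t| ≤ (⨆ y, |f y|) + ∫ y, |g y| := by
  have hfle (y : ℝ) : |f y| ≤ ⨆ z, |f z| := le_ciSup hf y
  have hgle : |∫ y in (x - t)..(x + t), g y| ≤ ∫ y, |g y| :=
    norm_intervalIntegral_le_integral_norm hg _ _
  have hplus := abs_le.mp (hfle (x + t))
  have hminus := abs_le.mp (hfle (x - t))
  have hint := abs_le.mp hgle
  rw [dAlembert, abs_le]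
  constructor <;> linarith

lemma continuous_duhamel {V : ℝ → ℝ → ℝ} (hV : Continuous fun q : ℝ × ℝ => V q.1 q.2) :
    Continuous fun q : ℝ × ℝ => duhamel V q.1 q.2 := by
  have hinner : Continuous fun r : (ℝ × ℝ) × ℝ =>
      ∫ y in (r.1.1 - r.1.2 + r.2)..(r.1.1 + r.1.2 - r.2), V y r.2 :=
    continuous_intervalIntegral_of_continuous_endpoints (h := fun (r : (ℝ × ℝ) × ℝ) y => V y r.2)
      (hV.comp (by fun_prop : Continuous fun z : ((ℝ × ℝ) × ℝ) × ℝ => (z.2, z.1.2)))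
      (by fun_prop) (by fun_prop)
  exact continuous_const.mul (continuous_intervalIntegral_of_continuous_endpoints
    (h := fun q s => ∫ y in (q.1 - q.2 + s)..(q.1 + q.2 - s), V y s)
    hinner continuous_const continuous_snd)

end WaveEquation

section Picard

variable {F w : ℝ → ℝ} {v : ℝ → ℝ → ℝ} {u : ℕ → ℝ → ℝ → ℝ}

lemma continuous_picard (hF : Continuous F) (hw : Continuous w) (hw0 : ∀ y, w y ≠ 0)
    (hv : Continuous fun q : ℝ × ℝ => v q.1 q.2) (hu0 : ∀ x t, u 0 x t = v x t)
    (hun : ∀ n x t, u (n + 1) x t = v x t + duhamel (fun y s => F (u n y s) / w y) x t) (n : ℕ) :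
    Continuous fun q : ℝ × ℝ => u n q.1 q.2 := by
  induction n with
  | zero => simpa only [hu0] using hv
  | succ n ih =>
    simp only [hun]
    exact hv.add (continuous_duhamel
      ((hF.comp ih).div (hw.comp continuous_fst) fun q => hw0 q.1))

lemma abs_picard_le {T K B R : ℝ} (hF : Continuous F) (hw : Continuous w) (hw0 : ∀ y, w y ≠ 0)
    (hK : IsDuhamelBound w T K) (hFB : ∀ s, |s| ≤ R → |F s| ≤ B) (hKB : K * B ≤ R / 2)
    (hv : Continuous fun q : ℝ × ℝ => v q.1 q.2)
    (hvR : ∀ x t, t ∈ Icc 0 T → |v x t| ≤ R / 2) (hu0 : ∀ x t, u 0 x t = v x t)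
    (hun : ∀ n x t, u (n + 1) x t = v x t + duhamel (fun y s => F (u n y s) / w y) x t) (n : ℕ) :
    ∀ x t, t ∈ Icc 0 T → |u n x t| ≤ R := by
  have hcont := continuous_picard hF hw hw0 hv hu0 hun
  induction n with
  | zero =>
    intro x t ht
    rw [hu0]
    linarith [hvR x t ht, abs_nonneg (v x t)]
  | succ n ih =>
    intro x t ht
    have hduhamel : |duhamel (fun y s => F (u n y s) / w y) x t| ≤ K * B :=
      hK _ (hF.comp (hcont n)).continuousOn B (fun y s hs => hFB _ (ih y s hs)) x t ht
    calc |u (n + 1) x t|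
        ≤ |v x t| + |duhamel (fun y s => F (u n y s) / w y) x t| := by
          rw [hun]; exact abs_add_le _ _
      _ ≤ R / 2 + R / 2 := add_le_add (hvR x t ht) (hduhamel.trans hKB)
      _ = R := add_halves R

end Picard

section Powers

variable {p : ℝ}

lemma rpow_eq_rpow_sub_one_mul {x : ℝ} (hx : 0 ≤ x) (hp : p ≠ 0) : x ^ p = x ^ (p - 1) * x := by
  rw [← rpow_add_one' hx (by simpa using hp), sub_add_cancel]

lemma mul_two_mul_rpow_le {K M ε : ℝ} (hp : p ≠ 0) (hM : 0 ≤ M) (hε : 0 ≤ ε)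
    (h : 2 ^ p * K * M ^ (p - 1) * ε ^ (p - 1) ≤ 1) : K * (2 * M * ε) ^ p ≤ M * ε := by
  calc K * (2 * M * ε) ^ p = 2 ^ p * K * M ^ (p - 1) * ε ^ (p - 1) * (M * ε) := by
        rw [mul_rpow (by positivity) hε, mul_rpow zero_le_two hM,
          rpow_eq_rpow_sub_one_mul hM hp, rpow_eq_rpow_sub_one_mul hε hp]
        ring
    _ ≤ M * ε := mul_le_of_le_one_left (by positivity) h

lemma two_rpow_mul_le_one {c : ℝ} (hp : 1 / 2 ≤ p) (h : 2 ^ (p + 1) * p * c ≤ 1) :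
    2 ^ p * c ≤ 1 := by
  have htwo_p : 2 * p * (2 ^ p * c) ≤ 1 := by
    rw [rpow_add_one two_ne_zero] at h
    linarith
  by_contra! hlt
  exact htwo_p.not_gt (one_lt_mul_of_le_of_lt (by linarith) hlt)

lemma continuous_one_add_sq_rpow (r : ℝ) : Continuous fun y : ℝ => (1 + y ^ 2) ^ r :=
  .rpow_const (by fun_prop) fun _ => .inl (by positivity)

lemma one_add_sq_rpow_ne_zero (r y : ℝ) : (1 + y ^ 2) ^ r ≠ 0 := by positivity

namespace IsPowerNonlinearity

variable {F : ℝ → ℝ}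

lemma abs_apply (hF : IsPowerNonlinearity p F) (hp : p ≠ 0) (s : ℝ) : |F s| = |s| ^ p := by
  rcases hF with h | h
  · rw [h, abs_mul, abs_rpow_of_nonneg (abs_nonneg s), abs_abs,
      ← rpow_eq_rpow_sub_one_mul (abs_nonneg s) hp]
  · rw [h, abs_rpow_of_nonneg (abs_nonneg s), abs_abs]

lemma continuous (hF : IsPowerNonlinearity p F) (hp : 1 ≤ p) : Continuous F := by
  rcases hF with h | h
  · rw [funext h]
    exact (continuous_abs.rpow_const fun _ => .inr (by linarith)).mul continuous_id
  · rw [funext h]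
    exact continuous_abs.rpow_const fun _ => .inr (by linarith)

end IsPowerNonlinearity

end Powers

theorem stmt_14_general {p ε T K M : ℝ} (hp : 0 < p) (hε : 0 ≤ ε) {F f g w : ℝ → ℝ}
    (hF : Continuous F) (hFp : ∀ s, |F s| ≤ |s| ^ p)
    (hf : Continuous f) (hfb : BddAbove (range fun x => |f x|)) (hg : Integrable g)
    (hM : M = (⨆ x, |f x|) + ∫ x, |g x|)
    (hw : Continuous w) (hw0 : ∀ y, w y ≠ 0) (hK : IsDuhamelBound w T K) {u : ℕ → ℝ → ℝ → ℝ}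
    (hu0 : ∀ x t, u 0 x t = ε * dAlembert f g x t)
    (hun : ∀ n x t,
      u (n + 1) x t = ε * dAlembert f g x t + duhamel (fun y s => F (u n y s) / w y) x t)
    (hsmall : 2 ^ p * K * M ^ (p - 1) * ε ^ (p - 1) ≤ 1) :
    ∀ n x t, t ∈ Icc 0 T → |u n x t| ≤ 2 * M * ε := by
  have hfree (x t : ℝ) : |dAlembert f g x t| ≤ M := hM ▸ abs_dAlembert_le hfb hg x t
  have hM0 : 0 ≤ M := (abs_nonneg _).trans (hfree 0 0)
  have hFball (s : ℝ) (hs : |s| ≤ 2 * M * ε) : |F s| ≤ (2 * M * ε) ^ p :=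
    (hFp s).trans (rpow_le_rpow (abs_nonneg s) hs hp.le)
  have hhalf : M * ε = 2 * M * ε / 2 := by ring
  refine abs_picard_le hF hw hw0 hK hFball
    (hhalf ▸ mul_two_mul_rpow_le hp.ne' hM0 hε hsmall)
    (continuous_const.mul (continuous_dAlembert hf fun _ _ => hg.intervalIntegrable))
    (fun x t _ => ?_) hu0 hun
  rw [← hhalf, abs_mul, abs_of_nonneg hε, mul_comm]
  exact mul_le_mul_of_nonneg_right (hfree x t) hε

/-- Uniform bound for the Picard iterates: with `M = ‖f‖_∞ + ‖g‖_{L¹}`, if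
`2^{p+1} p C_a D(T) M^{p-1} ε^{p-1} ≤ 1` then every iterate satisfies
`‖u_n‖_{L^∞(ℝ×[0,T])} ≤ 2Mε`. -/
theorem stmt_14 (p a ε T : ℝ) (hp : 1 < p) (ha : -1 ≤ a) (hε : 0 < ε) (hT : 0 < T)
    (F : ℝ → ℝ) (hF : (∀ s : ℝ, F s = |s| ^ (p - 1) * s) ∨ (∀ s : ℝ, F s = |s| ^ p))
    (f g : ℝ → ℝ) (hf : ContDiff ℝ 2 f) (hfb : BddAbove (Set.range fun x => |f x|))
    (hg : ContDiff ℝ 1 g) (hgi : Integrable g)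
    (M : ℝ) (hM : M = (⨆ x : ℝ, |f x|) + ∫ x : ℝ, |g x|)
    (D : ℝ → ℝ)
    (hD : ∀ τ : ℝ, D τ = if a < 0 then (1 + τ) ^ (1 - a)
      else if a = 0 then τ * Real.log (2 + τ) else 1 + τ)
    (Ca : ℝ)
    (hCa : ∀ V : ℝ → ℝ → ℝ,
      ContinuousOn (fun q : ℝ × ℝ => V q.1 q.2) (Set.univ ×ˢ Set.Icc 0 T) →
      ∀ B : ℝ, (∀ x t : ℝ, t ∈ Set.Icc (0:ℝ) T → |V x t| ≤ B) →
      ∀ x t : ℝ, t ∈ Set.Icc (0:ℝ) T →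
        |1 / 2 * ∫ s in (0:ℝ)..t, ∫ y in (x - t + s)..(x + t - s),
            V y s / (1 + y ^ 2) ^ ((1 + a) / 2)| ≤ Ca * D T * B)
    (u : ℕ → ℝ → ℝ → ℝ)
    (hu0 : ∀ x t : ℝ,
      u 0 x t = ε * ((f (x + t) + f (x - t)) / 2 + 1 / 2 * ∫ y in (x - t)..(x + t), g y))
    (hun : ∀ n : ℕ, ∀ x t : ℝ,
      u (n + 1) x t = ε * ((f (x + t) + f (x - t)) / 2 + 1 / 2 * ∫ y in (x - t)..(x + t), g y)
        + 1 / 2 * ∫ s in (0:ℝ)..t, ∫ y in (x - t + s)..(x + t - s),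
            F (u n y s) / (1 + y ^ 2) ^ ((1 + a) / 2))
    (hsmall : (2:ℝ) ^ (p + 1) * p * Ca * D T * M ^ (p - 1) * ε ^ (p - 1) ≤ 1) :
    ∀ n : ℕ, ∀ x t : ℝ, t ∈ Set.Icc (0:ℝ) T → |u n x t| ≤ 2 * M * ε := by
  have hF : IsPowerNonlinearity p F := hF
  have hsmall' : 2 ^ p * (Ca * D T * M ^ (p - 1) * ε ^ (p - 1)) ≤ 1 :=
    two_rpow_mul_le_one (by linarith) (by simpa only [mul_assoc] using hsmall)
  exact stmt_14_general (by linarith) hε.le (hF.continuous hp.le)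
    (fun s => (hF.abs_apply (by linarith) s).le) hf.continuous hfb hgi hM
    (continuous_one_add_sq_rpow _) (one_add_sq_rpow_ne_zero _) hCa hu0 hun
    (by simpa only [mul_assoc] using hsmall')
end

section
/- Let p > 1, a ≥ −1, ε > 0, T > 0. Let g ∈ C¹(ℝ) satisfy g(x) ≥ 0 for all x ∈ ℝ. If u ∈ C(ℝ×[0,T]) satisfies u(x,t) = (ε/2)∫_{x−t}^{x+t} g(y) dy + (1/2)∬_{D(x,t)} |u(y,s)|^p (1+y²)^{−(1+a)/2} dy ds for all (x,t) ∈ ℝ×[0,T], then u(x,t) ≥ 0 for all (x,t) ∈ ℝ×[0,T]; consequently u also satisfies the integral equation with nonlinearity |u|^{p−1}u in place of |u|^p. -/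
open MeasureTheory Real Set

/-- The Duhamel operator of the one-dimensional wave equation `∂ₜ²v - ∂ₓ²v = F` with zero initial
data: half the integral of `F` over the backward characteristic triangle `D(x, t)`. The integral is
iterated, over the horizontal slices `[x - t + s, x + t - s]` of `D(x, t)`, `0 ≤ s ≤ t`. -/
noncomputable def waveDuhamel (F : ℝ → ℝ → ℝ) (x t : ℝ) : ℝ :=
  1 / 2 * ∫ s in (0 : ℝ)..t, ∫ y in (x - t + s)..(x + t - s), F y s

section WaveDuhamel

variable {F G : ℝ → ℝ → ℝ} {x t : ℝ}

lemma waveDuhamel_nonneg (ht : 0 ≤ t)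
    (hF : ∀ s ∈ Icc 0 t, ∀ y ∈ Icc (x - t + s) (x + t - s), 0 ≤ F y s) :
    0 ≤ waveDuhamel F x t :=
  mul_nonneg one_half_pos.le <| intervalIntegral.integral_nonneg ht fun s hs ↦
    intervalIntegral.integral_nonneg (by linarith [hs.2]) (hF s hs)

lemma waveDuhamel_congr (ht : 0 ≤ t)
    (hFG : ∀ s ∈ Icc 0 t, ∀ y ∈ Icc (x - t + s) (x + t - s), F y s = G y s) :
    waveDuhamel F x t = waveDuhamel G x t := by
  refine congrArg (1 / 2 * ·) (intervalIntegral.integral_congr fun s hs ↦ ?_)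
  rw [uIcc_of_le ht] at hs
  refine intervalIntegral.integral_congr fun y hy ↦ hFG s hs y ?_
  rwa [uIcc_of_le (by linarith [hs.2])] at hy

end WaveDuhamel

lemma abs_rpow_eq_abs_rpow_sub_one_mul {p v : ℝ} (hp : p ≠ 0) (hv : 0 ≤ v) :
    |v| ^ p = |v| ^ (p - 1) * v := by
  rw [abs_of_nonneg hv, ← rpow_add_one' hv (by simpa using hp), sub_add_cancel]

theorem stmt_17_general {p T : ℝ} (hp : p ≠ 0) {φ w u : ℝ → ℝ → ℝ}
    (hφ : ∀ x, ∀ t ∈ Icc 0 T, 0 ≤ φ x t) (hw : ∀ y, ∀ s ∈ Icc 0 T, 0 ≤ w y s)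
    (hu : ∀ x, ∀ t ∈ Icc 0 T,
      u x t = φ x t + waveDuhamel (fun y s ↦ |u y s| ^ p * w y s) x t) :
    (∀ x, ∀ t ∈ Icc 0 T, 0 ≤ u x t) ∧
      ∀ x, ∀ t ∈ Icc 0 T,
        u x t = φ x t + waveDuhamel (fun y s ↦ |u y s| ^ (p - 1) * u y s * w y s) x t := by
  have u_nonneg (x t : ℝ) (ht : t ∈ Icc 0 T) : 0 ≤ u x t := by
    rw [hu x t ht]
    exact add_nonneg (hφ x t ht) <| waveDuhamel_nonneg ht.1 fun s hs y _ ↦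
      mul_nonneg (rpow_nonneg (abs_nonneg _) p) (hw y s (Icc_subset_Icc_right ht.2 hs))
  refine ⟨u_nonneg, fun x t ht ↦ (hu x t ht).trans ?_⟩
  congr 1
  refine waveDuhamel_congr ht.1 fun s hs y _ ↦ ?_
  rw [abs_rpow_eq_abs_rpow_sub_one_mul hp (u_nonneg y s (Icc_subset_Icc_right ht.2 hs))]

/-- Positivity of solutions of the integral equation with nonlinearity `|u|^p`:
if `g ≥ 0`, then any continuous solution `u` on `ℝ × [0,T]` is nonnegative there, and
consequently also solves the integral equation with nonlinearity `|u|^{p-1}u`. -/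
theorem stmt_17 (p a ε T : ℝ) (hp : 1 < p) (ha : -1 ≤ a) (hε : 0 < ε) (hT : 0 < T)
    (g : ℝ → ℝ) (hg : ContDiff ℝ 1 g) (hgpos : ∀ x, 0 ≤ g x)
    (u : ℝ → ℝ → ℝ)
    (hu : ContinuousOn (fun q : ℝ × ℝ => u q.1 q.2) (Set.univ ×ˢ Set.Icc 0 T))
    (heq : ∀ x t : ℝ, t ∈ Set.Icc (0:ℝ) T →
      u x t = ε / 2 * (∫ y in (x - t)..(x + t), g y)
        + 1 / 2 * ∫ s in (0:ℝ)..t, ∫ y in (x - t + s)..(x + t - s),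
            |u y s| ^ p / (1 + y ^ 2) ^ ((1 + a) / 2)) :
    (∀ x t : ℝ, t ∈ Set.Icc (0:ℝ) T → 0 ≤ u x t) ∧
    (∀ x t : ℝ, t ∈ Set.Icc (0:ℝ) T →
      u x t = ε / 2 * (∫ y in (x - t)..(x + t), g y)
        + 1 / 2 * ∫ s in (0:ℝ)..t, ∫ y in (x - t + s)..(x + t - s),
            |u y s| ^ (p - 1) * u y s / (1 + y ^ 2) ^ ((1 + a) / 2)) := by
  have free_wave_nonneg (x t : ℝ) (ht : t ∈ Icc 0 T) : 0 ≤ ε / 2 * ∫ y in (x - t)..(x + t), g y :=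
    mul_nonneg (half_pos hε).le <|
      intervalIntegral.integral_nonneg (by linarith [ht.1]) fun y _ ↦ hgpos y
  exact stmt_17_general (w := fun y _ ↦ ((1 + y ^ 2) ^ ((1 + a) / 2))⁻¹) (by linarith)
    free_wave_nonneg (fun y s _ ↦ by positivity) heq
end
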